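/- arXiv:1506.00456 — 2 statements merged into one kernel-verified Lean document; each statement's English description precedes it below -/
import Mathlib

section
/- Let ε > 0 and Re > 0 be real, k_x, k_y ≥ 0 real, ω ∈ ℂ, and set k² := k_x² + ε k_y² and μ² := ε k² − i ω Re √ε. Let 𝒜 : ℝ → ℂ be four times continuously differentiable, and define w(x,y,z,t) := 𝒜(z) · exp(i(k_x x + k_y y − ω t)). Then w satisfies (∂_z² + ε ∂_x² + ε² ∂_y²)(−Re √ε ∂_t + (∂_z² + ε ∂_x² + ε² ∂_y²)) w = 0 at every (x,y,z,t) ∈ ℝ⁴ if and only if 𝒜''''(z) − (ε k² + μ²) 𝒜''(z) + ε k² μ² 𝒜(z) = 0 for every z ∈ ℝ. -/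
noncomputable section

open Complex

/-- Partial derivative with respect to the first variable `x` (complex-valued). -/
def pdx (f : ℝ → ℝ → ℝ → ℝ → ℂ) : ℝ → ℝ → ℝ → ℝ → ℂ :=
  fun x y z t => deriv (fun x' => f x' y z t) x

/-- Partial derivative with respect to the second variable `y` (complex-valued). -/
def pdy (f : ℝ → ℝ → ℝ → ℝ → ℂ) : ℝ → ℝ → ℝ → ℝ → ℂ :=
  fun x y z t => deriv (fun y' => f x y' z t) y

/-- Partial derivative with respect to the third variable `z` (complex-valued). -/
def pdz (f : ℝ → ℝ → ℝ → ℝ → ℂ) : ℝ → ℝ → ℝ → ℝ → ℂ :=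
  fun x y z t => deriv (fun z' => f x y z' t) z

/-- Partial derivative with respect to the fourth variable `t` (complex-valued). -/
def pdt (f : ℝ → ℝ → ℝ → ℝ → ℂ) : ℝ → ℝ → ℝ → ℝ → ℂ :=
  fun x y z t => deriv (fun t' => f x y z t') t

/-- The operator `∂_z² + ε ∂_x² + ε² ∂_y²` (complex-valued). -/
def Lop (ε : ℝ) (f : ℝ → ℝ → ℝ → ℝ → ℂ) : ℝ → ℝ → ℝ → ℝ → ℂ :=
  fun x y z t =>
    pdz (pdz f) x y z t + (ε : ℂ) * pdx (pdx f) x y z t + (ε : ℂ) ^ 2 * pdy (pdy f) x y z t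

/-! On plane waves `∂_x`, `∂_y` and `∂_t` act as multiplication by `i k_x`, `i k_y` and `-i ω`, so
the two factors of the operator act on the profile as `d²/dz² - ε k²` and `d²/dz² - μ²`. Expanding
their product gives the fourth-order equation, and the exponential never vanishes. -/

section ModifiedHelmholtz

variable {𝕜 F : Type*} [NontriviallyNormedField 𝕜] [NormedAddCommGroup F] [NormedSpace 𝕜 F]

theorem iteratedDeriv_sub_of_differentiable {f g : 𝕜 → F} {n : ℕ}
    (hf : ∀ m < n, Differentiable 𝕜 (iteratedDeriv m f))
    (hg : ∀ m < n, Differentiable 𝕜 (iteratedDeriv m g)) :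
    iteratedDeriv n (f - g) = iteratedDeriv n f - iteratedDeriv n g := by
  induction n with
  | zero => simp only [iteratedDeriv_zero]
  | succ n ih =>
    rw [iteratedDeriv_succ, iteratedDeriv_succ, iteratedDeriv_succ,
      ih (fun m hm => hf m (by lia)) (fun m hm => hg m (by lia))]
    exact funext fun z => deriv_sub (hf n (by lia) z) (hg n (by lia) z)

theorem iteratedDeriv_iteratedDeriv (m n : ℕ) (f : 𝕜 → F) :
    iteratedDeriv m (iteratedDeriv n f) = iteratedDeriv (m + n) f := by
  simp only [iteratedDeriv_eq_iterate, Function.iterate_add_apply]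

variable {R : Type*} [DivisionRing R] [Module R F]

/-- The one-dimensional modified Helmholtz operator `d²/dz² - a`, through which each factor of the
plane-wave equation acts on the vertical profile. The scalars `R` need not be `𝕜`, so that
profiles of a real variable may have complex coefficients. -/
def modifiedHelmholtz (a : R) (f : 𝕜 → F) : 𝕜 → F :=
  iteratedDeriv 2 f - a • f

theorem modifiedHelmholtz_modifiedHelmholtz [SMulCommClass 𝕜 R F] [ContinuousConstSMul R F]
    (a b : R) {f : 𝕜 → F} (hf : ∀ m < 4, Differentiable 𝕜 (iteratedDeriv m f)) :
    modifiedHelmholtz a (modifiedHelmholtz b f) =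
      iteratedDeriv 4 f - (a + b) • iteratedDeriv 2 f + (a * b) • f := by
  have iteratedDeriv_smul (m : ℕ) : iteratedDeriv m (b • f) = b • iteratedDeriv m f :=
    funext fun _ => iteratedDeriv_const_smul_field b f
  have second_deriv : iteratedDeriv 2 (iteratedDeriv 2 f - b • f) =
      iteratedDeriv 4 f - b • iteratedDeriv 2 f := by
    rw [iteratedDeriv_sub_of_differentiable, iteratedDeriv_iteratedDeriv, iteratedDeriv_smul]
    · intro m hm
      rw [iteratedDeriv_iteratedDeriv]
      exact hf (m + 2) (by lia)
    · intro m hm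
      rw [iteratedDeriv_smul]
      exact (hf m (by lia)).const_smul b
  rw [modifiedHelmholtz, modifiedHelmholtz, second_deriv, smul_sub, add_smul, mul_smul]
  abel

end ModifiedHelmholtz

/-- The plane wave `B(z) exp(i (k_x x + k_y y - ω t))` with vertical profile `B`, on which the
partial derivatives act through the profile alone. The wave numbers `k_x`, `k_y` may be complex, as
for waves growing or decaying in `x` or `y`. -/
def planeWave (kx ky ω : ℂ) (B : ℝ → ℂ) : ℝ → ℝ → ℝ → ℝ → ℂ :=
  fun x y z t => B z * exp (I * (kx * x + ky * y - ω * t))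

theorem deriv_const_mul_cexp_affine (b p q : ℂ) (s : ℝ) :
    deriv (fun r : ℝ => b * exp (p * r + q)) s = p * b * exp (p * s + q) := by
  have complex_deriv : HasDerivAt (fun r : ℂ => b * exp (p * r + q))
      (b * (exp (p * s + q) * p)) s :=
    ((hasDerivAt_const_mul p).add_const q).cexp.const_mul b
  rw [complex_deriv.comp_ofReal.deriv]
  ring

section PlaneWave

variable (kx ky ω : ℂ) (B : ℝ → ℂ)

theorem pdx_planeWave : pdx (planeWave kx ky ω B) = planeWave kx ky ω ((I * kx) • B) := by
  funext x y z t
  have phase (s : ℝ) : I * (kx * s + ky * y - ω * t) = I * kx * s + I * (ky * y - ω * t) := by ring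
  simp only [pdx, planeWave, phase, deriv_const_mul_cexp_affine, Pi.smul_apply, smul_eq_mul]

theorem pdy_planeWave : pdy (planeWave kx ky ω B) = planeWave kx ky ω ((I * ky) • B) := by
  funext x y z t
  have phase (s : ℝ) : I * (kx * x + ky * s - ω * t) = I * ky * s + I * (kx * x - ω * t) := by ring
  simp only [pdy, planeWave, phase, deriv_const_mul_cexp_affine, Pi.smul_apply, smul_eq_mul]

theorem pdz_planeWave : pdz (planeWave kx ky ω B) = planeWave kx ky ω (deriv B) := by
  funext x y z t
  exact deriv_mul_const_field _

theorem pdt_planeWave : pdt (planeWave kx ky ω B) = planeWave kx ky ω (-(I * ω) • B) := by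
  funext x y z t
  have phase (s : ℝ) : I * (kx * x + ky * y - ω * s) = -(I * ω) * s + I * (kx * x + ky * y) := by
    ring
  simp only [pdt, planeWave, phase, deriv_const_mul_cexp_affine, Pi.smul_apply, smul_eq_mul]

theorem Lop_planeWave (ε : ℝ) :
    Lop ε (planeWave kx ky ω B) =
      planeWave kx ky ω (modifiedHelmholtz (ε * (kx ^ 2 + ε * ky ^ 2)) B) := by
  funext x y z t
  simp only [Lop, pdx_planeWave, pdy_planeWave, pdz_planeWave, planeWave, modifiedHelmholtz,
    iteratedDeriv_succ, iteratedDeriv_zero, Pi.sub_apply, Pi.smul_apply, smul_eq_mul]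
  linear_combination (B z * exp (I * (kx * x + ky * y - ω * t))) *
    (ε * kx ^ 2 + ε ^ 2 * ky ^ 2) * I_sq

theorem neg_mul_pdt_add_Lop_planeWave (ε : ℝ) (c : ℂ) :
    (fun x y z t => -c * pdt (planeWave kx ky ω B) x y z t + Lop ε (planeWave kx ky ω B) x y z t) =
      planeWave kx ky ω (modifiedHelmholtz (ε * (kx ^ 2 + ε * ky ^ 2) - I * ω * c) B) := by
  funext x y z t
  simp only [pdt_planeWave, Lop_planeWave, planeWave, modifiedHelmholtz, Pi.sub_apply,
    Pi.smul_apply, smul_eq_mul]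
  ring

theorem planeWave_eq_zero_iff :
    (∀ x y z t : ℝ, planeWave kx ky ω B x y z t = 0) ↔ ∀ z, B z = 0 := by
  simp only [planeWave, mul_eq_zero, exp_ne_zero, or_false, forall_const]

end PlaneWave

theorem plane_wave_ansatz_reduces_to_ODE_general (ε : ℝ) (c kx ky ω ksq musq : ℂ)
    (hksq : ksq = kx ^ 2 + ε * ky ^ 2) (hmusq : musq = ε * ksq - I * ω * c)
    {A : ℝ → ℂ} (hA : ∀ m < 4, Differentiable ℝ (iteratedDeriv m A)) :
    (∀ x y z t : ℝ,
      Lop ε (fun x' y' z' t' =>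
        -c * pdt (planeWave kx ky ω A) x' y' z' t' +
          Lop ε (planeWave kx ky ω A) x' y' z' t') x y z t = 0)
    ↔
    (∀ z : ℝ,
      iteratedDeriv 4 A z - (ε * ksq + musq) * iteratedDeriv 2 A z
        + ε * ksq * musq * A z = 0) := by
  subst hksq hmusq
  rw [neg_mul_pdt_add_Lop_planeWave, Lop_planeWave, planeWave_eq_zero_iff,
    modifiedHelmholtz_modifiedHelmholtz _ _ hA]
  rfl

theorem plane_wave_ansatz_reduces_to_ODE
    (ε Re kx ky : ℝ) (hε : 0 < ε) (hRe : 0 < Re) (hkx : 0 ≤ kx) (hky : 0 ≤ ky)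
    (ω : ℂ)
    (ksq : ℝ) (hksq : ksq = kx ^ 2 + ε * ky ^ 2)
    (musq : ℂ) (hmusq : musq = (↑(ε * ksq) : ℂ) - Complex.I * ω * ↑(Re * Real.sqrt ε))
    (A : ℝ → ℂ) (hA : ContDiff ℝ 4 A)
    (w : ℝ → ℝ → ℝ → ℝ → ℂ)
    (hw : w = fun (x y z t : ℝ) =>
      A z * Complex.exp (Complex.I * ((kx : ℂ) * (x : ℂ) + (ky : ℂ) * (y : ℂ) - ω * (t : ℂ)))) :
    (∀ x y z t : ℝ,
      Lop ε (fun x' y' z' t' =>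
        -(↑(Re * Real.sqrt ε) : ℂ) * pdt w x' y' z' t' + Lop ε w x' y' z' t') x y z t = 0)
    ↔
    (∀ z : ℝ,
      iteratedDeriv 4 A z - ((↑(ε * ksq) : ℂ) + musq) * iteratedDeriv 2 A z
        + (↑(ε * ksq) : ℂ) * musq * A z = 0) := by
  obtain rfl : w = planeWave kx ky ω A := hw
  exact_mod_cast plane_wave_ansatz_reduces_to_ODE_general ε ↑(Re * √ε) kx ky ω ksq musq
    (by exact_mod_cast hksq) (by exact_mod_cast hmusq)
    fun m hm => hA.differentiable_iteratedDeriv m (by exact_mod_cast hm)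
end
end

section
/- Let ε > 0, Re > 0, Bo > 0 and k > 0 be real, ω ∈ ℂ, and let μ ∈ ℂ satisfy μ² = ε k² − i ω Re √ε. Let k_x, k_y ≥ 0 with k² = k_x² + ε k_y². For constants C₁, C₂, C₃, C₄ ∈ ℂ, set 𝒜(z) := C₁ cosh(√ε k (z−1)) + C₂ sinh(√ε k (z−1)) + C₃ cosh(μ (z−1)) + C₄ sinh(μ (z−1)) and w(x,y,z,t) := 𝒜(z) exp(i(k_x x + k_y y − ω t)). Then w satisfies the four linearized boundary conditions w_z = 0 and w = 0 at z = 0, w_zz − ε w_xx − ε² w_yy = 0 at z = 1, and w_xx + ε w_yy − w_ztt + (3√ε/Re)(w_xxzt + ε w_yyzt) + (1/(Re √ε)) w_zzzt = (1/Bo)(∂_x² + ε ∂_y²)² w at z = 1, if and only if the vector (C₁, C₂, C₃, C₄) lies in the kernel of the 4×4 complex matrix M with rows: (√ε k sinh(√ε k), −√ε k cosh(√ε k), μ sinh μ, −μ cosh μ); (cosh(√ε k), −sinh(√ε k), cosh μ, −sinh μ); (2 k² ε, 0, μ² + ε k², 0); (−k² − k⁴/Bo, √ε ω² k + 2 i ε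 ω k³/Re, −k² − k⁴/Bo, 2 μ √ε i ω k²/Re). -/
noncomputable section

open Complex

/-- The operator `∂_x² + ε ∂_y²` (complex-valued). -/
def Pop (ε : ℝ) (f : ℝ → ℝ → ℝ → ℝ → ℂ) : ℝ → ℝ → ℝ → ℝ → ℂ :=
  fun x y z t => pdx (pdx f) x y z t + (ε : ℂ) * pdy (pdy f) x y z t

/-!
On a normal mode `f z * exp (I * (kx * x + ky * y - ω * t))` the operators `∂_x`, `∂_y`, `∂_t` act
as multiplication by `I * kx`, `I * ky`, `-I * ω`, so after division by the exponential the boundary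
conditions become conditions on `f` and its derivatives at `0` and `1`. Differentiation permutes the
four hyperbolic functions up to the factors `√ε * k` and `μ`, so for the profile `A` these
conditions are linear in `C₁, …, C₄`; the definition of `μ` brings the last one to the stated form.
-/

/-- The normal mode with profile `f`, wave vector `(kx, ky)` and pulsation `ω`; the wave vector may
be complex. -/
def normalMode (kx ky ω : ℂ) (f : ℝ → ℂ) : ℝ → ℝ → ℝ → ℝ → ℂ :=
  fun x y z t => f z * exp (I * (kx * x + ky * y - ω * t))

/-- The solution of `(∂² - a²) (∂² - b²) f = 0` with the given constants, in the basis of hyperbolic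
functions centred at the free surface `z = 1`. -/
def hyperbolicProfile (a b C₁ C₂ C₃ C₄ : ℂ) : ℝ → ℂ :=
  fun z => C₁ * cosh (a * (z - 1)) + C₂ * sinh (a * (z - 1))
    + C₃ * cosh (b * (z - 1)) + C₄ * sinh (b * (z - 1))

/-- The tangential stress of the flow with vertical velocity `w`, up to a factor, the horizontal
velocities being eliminated. -/
def tangentialStress (ε : ℝ) (w : ℝ → ℝ → ℝ → ℝ → ℂ) : ℝ → ℝ → ℝ → ℝ → ℂ :=
  fun x y z t => pdz (pdz w) x y z t - ε * pdx (pdx w) x y z t - ε ^ 2 * pdy (pdy w) x y z t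

/-- The gravity, pressure and viscous terms of the normal stress balance for the vertical velocity
`w`, the pressure and the surface elevation being eliminated. -/
def normalStress (ε : ℝ) (Re : ℂ) (w : ℝ → ℝ → ℝ → ℝ → ℂ) : ℝ → ℝ → ℝ → ℝ → ℂ :=
  fun x y z t => pdx (pdx w) x y z t + ε * pdy (pdy w) x y z t - pdt (pdt (pdz w)) x y z t
    + 3 * √ε / Re * (pdt (pdz (pdx (pdx w))) x y z t + ε * pdt (pdz (pdy (pdy w))) x y z t)
    + 1 / (Re * √ε) * pdt (pdz (pdz (pdz w))) x y z t

/-- The linearized boundary conditions for the vertical velocity `w`: no slip and impermeability at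
the bottom `z = 0`, vanishing tangential stress and balance of normal stress and surface tension at
the free surface `z = 1`. -/
def SatisfiesBoundaryConditions (ε : ℝ) (Re Bo : ℂ) (w : ℝ → ℝ → ℝ → ℝ → ℂ) : Prop :=
  ∀ x y t : ℝ,
    pdz w x y 0 t = 0 ∧
    w x y 0 t = 0 ∧
    tangentialStress ε w x y 1 t = 0 ∧
    normalStress ε Re w x y 1 t = 1 / Bo * Pop ε (Pop ε w) x y 1 t

/-- The matrix of the boundary conditions in the constants `C₁, C₂, C₃, C₄` of a
`hyperbolicProfile` with wave numbers `√ε * k` and `μ`. -/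
def boundaryMatrix (ε : ℝ) (Re Bo k ω μ : ℂ) : Matrix (Fin 4) (Fin 4) ℂ :=
  !![√ε * k * sinh (√ε * k), -(√ε * k) * cosh (√ε * k), μ * sinh μ, -μ * cosh μ;
    cosh (√ε * k), -sinh (√ε * k), cosh μ, -sinh μ;
    2 * k ^ 2 * ε, 0, μ ^ 2 + ε * k ^ 2, 0;
    -k ^ 2 - k ^ 4 / Bo, √ε * ω ^ 2 * k + 2 * I * ε * ω * k ^ 3 / Re,
      -k ^ 2 - k ^ 4 / Bo, 2 * μ * √ε * I * ω * k ^ 2 / Re]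

lemma deriv_const_mul_cexp {φ : ℝ → ℂ} {φ' : ℂ} {s : ℝ} (c : ℂ) (hφ : HasDerivAt φ φ' s) :
    deriv (fun s => c * exp (φ s)) s = φ' * c * exp (φ s) := by
  rw [(hφ.cexp.const_mul c).deriv]
  ring

lemma hasDerivAt_const_mul_ofReal (c : ℂ) (s : ℝ) : HasDerivAt (fun s : ℝ => c * (s : ℂ)) c s := by
  simpa only [id, ofReal_one, mul_one] using (hasDerivAt_id s).ofReal_comp.const_mul c

section NormalMode

variable {kx ky ω : ℂ} {f g : ℝ → ℂ}

lemma normalMode_eq_zero_iff {x y z t : ℝ} : normalMode kx ky ω f x y z t = 0 ↔ f z = 0 := by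
  simp only [normalMode, mul_eq_zero, exp_ne_zero, or_false]

lemma normalMode_eq_normalMode_iff {x y z t : ℝ} :
    normalMode kx ky ω f x y z t = normalMode kx ky ω g x y z t ↔ f z = g z :=
  mul_left_inj' (exp_ne_zero _)

lemma const_mul_normalMode (c : ℂ) (x y z t : ℝ) :
    c * normalMode kx ky ω f x y z t = normalMode kx ky ω (fun z => c * f z) x y z t :=
  (mul_assoc _ _ _).symm

lemma pdx_normalMode :
    pdx (normalMode kx ky ω f) = normalMode kx ky ω (fun z => I * kx * f z) := by
  funext x y z t
  exact deriv_const_mul_cexp (f z)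
    ((((hasDerivAt_const_mul_ofReal kx x).add_const _).sub_const _).const_mul I)

lemma pdy_normalMode :
    pdy (normalMode kx ky ω f) = normalMode kx ky ω (fun z => I * ky * f z) := by
  funext x y z t
  exact deriv_const_mul_cexp (f z)
    ((((hasDerivAt_const_mul_ofReal ky y).const_add _).sub_const _).const_mul I)

lemma pdt_normalMode :
    pdt (normalMode kx ky ω f) = normalMode kx ky ω (fun z => I * -ω * f z) := by
  funext x y z t
  exact deriv_const_mul_cexp (f z)
    (((hasDerivAt_const_mul_ofReal ω t).const_sub _).const_mul I)

lemma pdz_normalMode : pdz (normalMode kx ky ω f) = normalMode kx ky ω (deriv f) := by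
  funext x y z t
  exact deriv_mul_const_field _

variable {ε : ℝ} {k Re Bo : ℂ}

lemma Pop_normalMode (hk2 : k ^ 2 = kx ^ 2 + ε * ky ^ 2) :
    Pop ε (normalMode kx ky ω f) = normalMode kx ky ω (fun z => -k ^ 2 * f z) := by
  funext x y z t
  simp only [Pop, pdx_normalMode, pdy_normalMode, normalMode, hk2]
  linear_combination (kx ^ 2 + ε * ky ^ 2) * f z * exp (I * (kx * x + ky * y - ω * t)) * I_sq

lemma tangentialStress_normalMode (hk2 : k ^ 2 = kx ^ 2 + ε * ky ^ 2) :
    tangentialStress ε (normalMode kx ky ω f)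
      = normalMode kx ky ω (fun z => deriv (deriv f) z + ε * k ^ 2 * f z) := by
  have hstress (w : ℝ → ℝ → ℝ → ℝ → ℂ) (x y z t : ℝ) :
      tangentialStress ε w x y z t = pdz (pdz w) x y z t - ε * Pop ε w x y z t := by
    unfold tangentialStress Pop
    ring
  funext x y z t
  simp only [hstress, Pop_normalMode hk2, pdz_normalMode, normalMode]
  ring

lemma normalStress_normalMode (hk2 : k ^ 2 = kx ^ 2 + ε * ky ^ 2) :
    normalStress ε Re (normalMode kx ky ω f)
      = normalMode kx ky ω (fun z => -k ^ 2 * f z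
          + (ω ^ 2 + 3 * √ε / Re * I * ω * k ^ 2) * deriv f z
          - 1 / (Re * √ε) * I * ω * deriv (deriv (deriv f)) z) := by
  funext x y z t
  simp only [normalStress, pdx_normalMode, pdy_normalMode, pdt_normalMode, pdz_normalMode,
    deriv_const_mul_field', normalMode]
  generalize exp _ = E
  linear_combination (kx ^ 2 + ε * ky ^ 2) * f z * E * I_sq + f z * E * hk2
    - ω ^ 2 * deriv f z * E * I_sq
    - 3 * √ε / Re * I * ω * deriv f z * E * ((kx ^ 2 + ε * ky ^ 2) * I_sq + hk2)

lemma satisfiesBoundaryConditions_normalMode_iff (hk2 : k ^ 2 = kx ^ 2 + ε * ky ^ 2) :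
    SatisfiesBoundaryConditions ε Re Bo (normalMode kx ky ω f) ↔
      deriv f 0 = 0 ∧ f 0 = 0 ∧ deriv (deriv f) 1 + ε * k ^ 2 * f 1 = 0 ∧
      -k ^ 2 * f 1 + (ω ^ 2 + 3 * √ε / Re * I * ω * k ^ 2) * deriv f 1
          - 1 / (Re * √ε) * I * ω * deriv (deriv (deriv f)) 1
        = 1 / Bo * (-k ^ 2 * (-k ^ 2 * f 1)) := by
  simp only [SatisfiesBoundaryConditions, pdz_normalMode, tangentialStress_normalMode hk2,
    normalStress_normalMode hk2, Pop_normalMode hk2, const_mul_normalMode, normalMode_eq_zero_iff,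
    normalMode_eq_normalMode_iff, forall_const]

end NormalMode

section HyperbolicProfile

variable (a b C₁ C₂ C₃ C₄ : ℂ)

lemma deriv_hyperbolicProfile :
    deriv (hyperbolicProfile a b C₁ C₂ C₃ C₄)
      = hyperbolicProfile a b (a * C₂) (a * C₁) (b * C₄) (b * C₃) := by
  funext z
  have hphase (c : ℂ) : HasDerivAt (fun z : ℂ => c * (z - 1)) c z := by
    simpa only [id, mul_one] using ((hasDerivAt_id (z : ℂ)).sub_const 1).const_mul c
  have hcosh (c C : ℂ) := ((hphase c).ccosh.const_mul C).comp_ofReal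
  have hsinh (c C : ℂ) := ((hphase c).csinh.const_mul C).comp_ofReal
  refine ((((hcosh a C₁).add (hsinh a C₂)).add (hcosh b C₃)).add (hsinh b C₄)).deriv.trans ?_
  unfold hyperbolicProfile
  ring

lemma hyperbolicProfile_zero :
    hyperbolicProfile a b C₁ C₂ C₃ C₄ 0
      = cosh a * C₁ - sinh a * C₂ + cosh b * C₃ - sinh b * C₄ := by
  simp only [hyperbolicProfile, ofReal_zero, zero_sub, mul_neg, mul_one, cosh_neg, sinh_neg]
  ring

lemma hyperbolicProfile_one : hyperbolicProfile a b C₁ C₂ C₃ C₄ 1 = C₁ + C₃ := by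
  simp [hyperbolicProfile]

end HyperbolicProfile

section NormalStressCoefficients

variable {r Re k ω μ : ℂ}

lemma normalStress_coeff_potential (hr : r ≠ 0) :
    (ω ^ 2 + 3 * r / Re * I * ω * k ^ 2) * (r * k) - 1 / (Re * r) * I * ω * (r * k) ^ 3
      = r * ω ^ 2 * k + 2 * I * r ^ 2 * ω * k ^ 3 / Re := by
  field_simp
  ring

lemma normalStress_coeff_viscous (hr : r ≠ 0) (hRe : Re ≠ 0)
    (hμ : μ ^ 2 = r ^ 2 * k ^ 2 - I * ω * (Re * r)) :
    (ω ^ 2 + 3 * r / Re * I * ω * k ^ 2) * μ - 1 / (Re * r) * I * ω * μ ^ 3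
      = 2 * μ * r * I * ω * k ^ 2 / Re := by
  rw [pow_succ μ 2, hμ]
  field_simp
  linear_combination ω ^ 2 * μ * Re * I_sq

end NormalStressCoefficients

lemma boundaryMatrix_mulVec {ε : ℝ} {Re Bo k ω μ : ℂ} (hε : 0 < ε) (hRe : Re ≠ 0)
    (hμ : μ ^ 2 = ε * k ^ 2 - I * ω * (Re * √ε)) {C₁ C₂ C₃ C₄ : ℂ} {f : ℝ → ℂ}
    (hf : f = hyperbolicProfile (√ε * k) μ C₁ C₂ C₃ C₄) :
    (boundaryMatrix ε Re Bo k ω μ).mulVec ![C₁, C₂, C₃, C₄] =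
      ![-deriv f 0, f 0, deriv (deriv f) 1 + ε * k ^ 2 * f 1,
        -k ^ 2 * f 1 + (ω ^ 2 + 3 * √ε / Re * I * ω * k ^ 2) * deriv f 1
          - 1 / (Re * √ε) * I * ω * deriv (deriv (deriv f)) 1
          - 1 / Bo * (-k ^ 2 * (-k ^ 2 * f 1))] := by
  have hsqrt : (√ε : ℂ) ≠ 0 := ofReal_ne_zero.2 (Real.sqrt_pos.2 hε).ne'
  have hsq : (√ε : ℂ) ^ 2 = ε := by rw [← ofReal_pow, Real.sq_sqrt hε.le]
  have hpotential := normalStress_coeff_potential (Re := Re) (k := k) (ω := ω) hsqrt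
  have hviscous := normalStress_coeff_viscous hsqrt hRe (hsq.symm ▸ hμ)
  rw [hsq] at hpotential
  simp only [hf, deriv_hyperbolicProfile, hyperbolicProfile_zero, hyperbolicProfile_one,
    boundaryMatrix, Matrix.cons_mulVec, Matrix.empty_mulVec, Matrix.cons_dotProduct_cons,
    Matrix.dotProduct_of_isEmpty]
  congrm ![?_, ?_, ?_, ?_]
  · ring
  · ring
  · linear_combination -k ^ 2 * C₁ * hsq
  · linear_combination -C₂ * hpotential - C₄ * hviscous

theorem boundary_conditions_iff_kernel_general {ε : ℝ} {Re Bo k kx ky ω μ : ℂ}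
    (hε : 0 < ε) (hRe : Re ≠ 0) (_hBo : Bo ≠ 0) (hk2 : k ^ 2 = kx ^ 2 + ε * ky ^ 2)
    (hμ : μ ^ 2 = ε * k ^ 2 - I * ω * (Re * √ε)) (C₁ C₂ C₃ C₄ : ℂ) :
    SatisfiesBoundaryConditions ε Re Bo
        (normalMode kx ky ω (hyperbolicProfile (√ε * k) μ C₁ C₂ C₃ C₄)) ↔
      (boundaryMatrix ε Re Bo k ω μ).mulVec ![C₁, C₂, C₃, C₄] = 0 := by
  rw [satisfiesBoundaryConditions_normalMode_iff hk2, boundaryMatrix_mulVec hε hRe hμ rfl]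
  simp only [Matrix.cons_eq_zero_iff, neg_eq_zero, sub_eq_zero, Matrix.zero_empty, and_true]

theorem boundary_conditions_iff_kernel
    (ε Re Bo k kx ky : ℝ) (hε : 0 < ε) (hRe : 0 < Re) (hBo : 0 < Bo) (hk : 0 < k)
    (hkx : 0 ≤ kx) (hky : 0 ≤ ky) (hk2 : k ^ 2 = kx ^ 2 + ε * ky ^ 2)
    (ω μ : ℂ)
    (hμ : μ ^ 2 = ((ε * k ^ 2 : ℝ) : ℂ) - Complex.I * ω * ((Re * Real.sqrt ε : ℝ) : ℂ))
    (C₁ C₂ C₃ C₄ : ℂ)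
    (A : ℝ → ℂ)
    (hA : A = fun z : ℝ =>
      C₁ * Complex.cosh (((Real.sqrt ε * k * (z - 1) : ℝ) : ℂ))
        + C₂ * Complex.sinh (((Real.sqrt ε * k * (z - 1) : ℝ) : ℂ))
        + C₃ * Complex.cosh (μ * ((z : ℂ) - 1))
        + C₄ * Complex.sinh (μ * ((z : ℂ) - 1)))
    (w : ℝ → ℝ → ℝ → ℝ → ℂ)
    (hw : w = fun (x y z t : ℝ) =>
      A z * Complex.exp (Complex.I * ((kx : ℂ) * (x : ℂ) + (ky : ℂ) * (y : ℂ) - ω * (t : ℂ))))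
    (M : Matrix (Fin 4) (Fin 4) ℂ)
    (hM : M = !![
      ((Real.sqrt ε * k : ℝ) : ℂ) * Complex.sinh (((Real.sqrt ε * k : ℝ) : ℂ)),
        -((Real.sqrt ε * k : ℝ) : ℂ) * Complex.cosh (((Real.sqrt ε * k : ℝ) : ℂ)),
        μ * Complex.sinh μ, -μ * Complex.cosh μ;
      Complex.cosh (((Real.sqrt ε * k : ℝ) : ℂ)), -Complex.sinh (((Real.sqrt ε * k : ℝ) : ℂ)),
        Complex.cosh μ, -Complex.sinh μ;
      ((2 * k ^ 2 * ε : ℝ) : ℂ), 0, μ ^ 2 + ((ε * k ^ 2 : ℝ) : ℂ), 0;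
      ((-(k ^ 2) - k ^ 4 / Bo : ℝ) : ℂ),
        (↑(Real.sqrt ε) : ℂ) * ω ^ 2 * (k : ℂ)
          + 2 * Complex.I * (ε : ℂ) * ω * (k : ℂ) ^ 3 / (Re : ℂ),
        ((-(k ^ 2) - k ^ 4 / Bo : ℝ) : ℂ),
        2 * μ * (↑(Real.sqrt ε) : ℂ) * Complex.I * ω * (k : ℂ) ^ 2 / (Re : ℂ)]) :
    (∀ x y t : ℝ,
      pdz w x y 0 t = 0 ∧
      w x y 0 t = 0 ∧
      pdz (pdz w) x y 1 t - (ε : ℂ) * pdx (pdx w) x y 1 t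
        - ((ε : ℂ)) ^ 2 * pdy (pdy w) x y 1 t = 0 ∧
      pdx (pdx w) x y 1 t + (ε : ℂ) * pdy (pdy w) x y 1 t - pdt (pdt (pdz w)) x y 1 t
        + ((3 * Real.sqrt ε / Re : ℝ) : ℂ) *
          (pdt (pdz (pdx (pdx w))) x y 1 t + (ε : ℂ) * pdt (pdz (pdy (pdy w))) x y 1 t)
        + ((1 / (Re * Real.sqrt ε) : ℝ) : ℂ) * pdt (pdz (pdz (pdz w))) x y 1 t
        = ((1 / Bo : ℝ) : ℂ) * Pop ε (Pop ε w) x y 1 t)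
    ↔ M.mulVec ![C₁, C₂, C₃, C₄] = 0 := by
  subst hA hw hM
  push_cast at hμ ⊢
  exact boundary_conditions_iff_kernel_general hε (ofReal_ne_zero.2 hRe.ne')
    (ofReal_ne_zero.2 hBo.ne') (mod_cast hk2) hμ C₁ C₂ C₃ C₄
end
end
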